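/- Let e be an admissible tableau supported on X(v_6). If S(2k) = B∪{4n−2,4n+2}, then S(1) = A∪{4n−1,4n,4n+1} (in particular e(1,2n+2) ≠ 4n+2), so the first and last rows together form the pattern X_5. -/

import Mathlib

/-!
Put `N = 4n+2`. For a row `i` let `c_i(m)` be the number of its entries `≤ m` (`cnt`).
Columns being nondecreasing, `c_i(m)` is nonincreasing in `i` (`cnt_anti`). By (R3) a row contains
at most one of `t` and `2N+1-t`, so by (R5) each value occurs at most `k` times in the tableau; as
there are `2N` values and `2kN` cells, each value occurs exactly `k` times (`occ_eq`). Hence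
`∑ i, c_i(m) = k m` (`sum_cnt`): the average of `c_i(m)` over the `2k` rows is `m/2`.

The last row has the smallest counts, and its small set gives `c_{2k}(2p) = p` for `p ≤ 2n-1`,
which is already the average; so `c_i(2p) = p` in every row. The first row has the largest counts,
so `c_1(2p+1) ≥ p+1`. Thus the first row contains `2p+1` and not `2p+2` for `p ≤ 2n-2`.

It remains to treat the four values `4n-1, …, 4n+2`. Every `c_i(N)` is even by (R4), at least `2n`
(last row) and at most `2n+3`, so it is `2n` or `2n+2`; as the average is `2n+1`, it is `2n+2` in
row `1`. If `c_1(N-1) ≤ 2n+1`, then `2 c_i(N-1) ≤ c_i(N) + 2n` in every row, strictly in the last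
one, where `c_{2k}(N-1) = 2n-1`; summing over the rows contradicts `sum_cnt`. So
`c_1(N-1) = 2n+2`, that is, the first row contains `4n-1, 4n, 4n+1` and not `4n+2`.
-/

/-- The "small set" `S(i) = { e(i,j) : 1 ≤ j ≤ 4n+2, e(i,j) ≤ 4n+2 }` of row `i`. -/
def smallSet (n : ℕ) (e : ℕ → ℕ → ℕ) (i : ℕ) : Finset ℕ :=
  ((Finset.Icc 1 (4*n+2)).filter (fun j => e i j ≤ 4*n+2)).image (e i)

/-- `A = {1,3,5,…,4n-3}`, the odd integers `≤ 4n-3`. -/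
def setA (n : ℕ) : Finset ℕ := (Finset.Icc 1 (4*n-3)).filter (fun t => ¬ 2 ∣ t)

/-- `B = {2,4,…,4n-4}`, the even integers `≤ 4n-4`. -/
def setB (n : ℕ) : Finset ℕ := (Finset.Icc 1 (4*n-4)).filter (fun t => 2 ∣ t)

/-- An admissible tableau: `e i j ∈ {1,…,8n+4}` for `1 ≤ i ≤ 2k`, `1 ≤ j ≤ 4n+2`,
subject to the conditions (R1)–(R5). -/
structure IsAdmissible (n k : ℕ) (e : ℕ → ℕ → ℕ) : Prop where
  mem_range : ∀ i j, 1 ≤ i → i ≤ 2*k → 1 ≤ j → j ≤ 4*n+2 → 1 ≤ e i j ∧ e i j ≤ 8*n+4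
  /-- (R1) rows strictly increase -/
  row_strict : ∀ i j, 1 ≤ i → i ≤ 2*k → 1 ≤ j → j < 4*n+2 → e i j < e i (j+1)
  /-- (R2) columns are nondecreasing -/
  col_mono : ∀ i j, 1 ≤ i → i < 2*k → 1 ≤ j → j ≤ 4*n+2 → e i j ≤ e (i+1) j
  /-- (R3) no row contains both `t` and `8n+5-t` -/
  no_pair : ∀ i j j', 1 ≤ i → i ≤ 2*k → 1 ≤ j → j ≤ 4*n+2 → 1 ≤ j' → j' ≤ 4*n+2 →
    e i j + e i j' ≠ 8*n+5
  /-- (R4) each row has an even number of entries `> 4n+2` -/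
  even_big : ∀ i, 1 ≤ i → i ≤ 2*k →
    Even (((Finset.Icc 1 (4*n+2)).filter (fun j => 4*n+2 < e i j)).card)
  /-- (R5) `t` and `8n+5-t` occur equally often in the tableau -/
  balanced : ∀ t, 1 ≤ t → t ≤ 8*n+4 →
    (((Finset.Icc 1 (2*k)) ×ˢ (Finset.Icc 1 (4*n+2))).filter
      (fun p => e p.1 p.2 = t)).card =
    (((Finset.Icc 1 (2*k)) ×ˢ (Finset.Icc 1 (4*n+2))).filter
      (fun p => e p.1 p.2 = 8*n+5-t)).card

/-- The first `4n+2` entries of the one-line notation of `v₆`. -/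
def bnd (n : ℕ) (j : ℕ) : ℕ :=
  if j ≤ 2*n-2 then 2*j
  else if j = 2*n-1 then 4*n-1
  else if j = 2*n then 4*n+2
  else if j = 2*n+1 then 4*n+4
  else if j = 2*n+2 then 4*n+5
  else if j = 2*n+3 then 4*n+7
  else 2*j

/-- The tableau is supported on the Schubert variety `X(v₆)`. -/
def SupportedOnXv6 (n k : ℕ) (e : ℕ → ℕ → ℕ) : Prop :=
  ∀ j, 1 ≤ j → j ≤ 4*n+2 → e (2*k) j ≤ bnd n j

/-- The number of entries of row `i` equal to `t`. -/
def mult (n : ℕ) (e : ℕ → ℕ → ℕ) (i t : ℕ) : ℕ :=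
  ((Finset.Icc 1 (4*n+2)).filter (fun j => e i j = t)).card

/-- The number of entries of row `i` that are at most `m`. -/
def cnt (n : ℕ) (e : ℕ → ℕ → ℕ) (i m : ℕ) : ℕ :=
  ((Finset.Icc 1 (4*n+2)).filter (fun j => e i j ≤ m)).card

lemma cnt_succ (n : ℕ) (e : ℕ → ℕ → ℕ) (i m : ℕ) :
    cnt n e i (m+1) = cnt n e i m + mult n e i (m+1) := by
  unfold cnt mult
  rw [← Finset.card_union_of_disjoint]
  · congr 1
    ext j
    simp only [Finset.mem_filter, Finset.mem_union]
    constructor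
    · rintro ⟨h1, h2⟩
      rcases Nat.lt_or_ge m (e i j) with h | h
      · exact Or.inr ⟨h1, by omega⟩
      · exact Or.inl ⟨h1, h⟩
    · rintro (⟨h1, h2⟩ | ⟨h1, h2⟩)
      · exact ⟨h1, by omega⟩
      · exact ⟨h1, by omega⟩
  · rw [Finset.disjoint_left]
    intro j h1 h2
    simp only [Finset.mem_filter] at h1 h2
    omega

lemma mem_smallSet_iff (n : ℕ) (e : ℕ → ℕ → ℕ) (i t : ℕ) :
    t ∈ smallSet n e i ↔ t ≤ 4*n+2 ∧ 1 ≤ mult n e i t := by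
  unfold smallSet mult
  rw [Nat.succ_le_iff, Finset.card_pos]
  simp only [Finset.mem_image, Finset.mem_filter, Finset.Nonempty]
  constructor
  · rintro ⟨j, ⟨h1, h2⟩, h3⟩
    exact ⟨by omega, j, h1, h3⟩
  · rintro ⟨h, j, h1, h3⟩
    exact ⟨j, ⟨h1, by omega⟩, h3⟩

section
variable {n k : ℕ} {e : ℕ → ℕ → ℕ}

lemma row_lt (he : IsAdmissible n k e) {i : ℕ} (hi : 1 ≤ i) (hi' : i ≤ 2*k) {j j' : ℕ}
    (hj : 1 ≤ j) (hjj : j < j') (hj' : j' ≤ 4*n+2) : e i j < e i j' := by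
  induction j', hjj using Nat.le_induction with
  | base => exact he.row_strict i j hi hi' hj (by omega)
  | succ m hm ih =>
    have h1 := ih (by omega)
    have h2 := he.row_strict i m hi hi' (by omega) (by omega)
    omega

lemma col_le (he : IsAdmissible n k e) {i i' j : ℕ} (hi : 1 ≤ i) (hii : i ≤ i')
    (hi' : i' ≤ 2*k) (hj : 1 ≤ j) (hj' : j ≤ 4*n+2) : e i j ≤ e i' j := by
  induction i', hii using Nat.le_induction with
  | base => exact le_rfl
  | succ m hm ih =>
    have h1 := ih (by omega)
    have h2 := he.col_mono m j (by omega) (by omega) hj hj'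
    omega

lemma cnt_anti (he : IsAdmissible n k e) {i i' : ℕ} (m : ℕ) (hi : 1 ≤ i) (hii : i ≤ i')
    (hi' : i' ≤ 2*k) : cnt n e i' m ≤ cnt n e i m := by
  unfold cnt
  apply Finset.card_le_card
  intro j
  simp only [Finset.mem_filter, Finset.mem_Icc]
  rintro ⟨⟨h1, h2⟩, h3⟩
  exact ⟨⟨h1, h2⟩, (col_le he hi hii hi' h1 h2).trans h3⟩

lemma mult_le_one (he : IsAdmissible n k e) {i : ℕ} (hi : 1 ≤ i) (hi' : i ≤ 2*k) (t : ℕ) :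
    mult n e i t ≤ 1 := by
  unfold mult
  rw [Finset.card_le_one]
  intro a ha b hb
  simp only [Finset.mem_filter, Finset.mem_Icc] at ha hb
  rcases lt_trichotomy a b with h | h | h
  · have := row_lt he hi hi' ha.1.1 h hb.1.2
    omega
  · exact h
  · have := row_lt he hi hi' hb.1.1 h ha.1.2
    omega

lemma mult_pair (he : IsAdmissible n k e) {i : ℕ} (hi : 1 ≤ i) (hi' : i ≤ 2*k) {t : ℕ}
    (ht : t ≤ 8*n+4) : mult n e i t + mult n e i (8*n+5-t) ≤ 1 := by
  by_contra hcon
  have h1 := mult_le_one he hi hi' t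
  have h2 := mult_le_one he hi hi' (8*n+5-t)
  have h3 : 0 < mult n e i t := by omega
  have h4 : 0 < mult n e i (8*n+5-t) := by omega
  unfold mult at h3 h4
  obtain ⟨a, ha⟩ := Finset.card_pos.mp h3
  obtain ⟨b, hb⟩ := Finset.card_pos.mp h4
  simp only [Finset.mem_filter, Finset.mem_Icc] at ha hb
  exact he.no_pair i a b hi hi' ha.1.1 ha.1.2 hb.1.1 hb.1.2 (by omega)

lemma cnt_zero (he : IsAdmissible n k e) {i : ℕ} (hi : 1 ≤ i) (hi' : i ≤ 2*k) :
    cnt n e i 0 = 0 := by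
  unfold cnt
  rw [Finset.card_eq_zero, Finset.filter_eq_empty_iff]
  intro j hj
  rw [Finset.mem_Icc] at hj
  have := he.mem_range i j hi hi' hj.1 hj.2
  omega

lemma cnt_top (he : IsAdmissible n k e) {i : ℕ} (hi : 1 ≤ i) (hi' : i ≤ 2*k) :
    cnt n e i (8*n+4) = 4*n+2 := by
  unfold cnt
  rw [Finset.filter_true_of_mem]
  · simp
  · intro j hj
    rw [Finset.mem_Icc] at hj
    exact (he.mem_range i j hi hi' hj.1 hj.2).2

lemma cnt_even (he : IsAdmissible n k e) {i : ℕ} (hi : 1 ≤ i) (hi' : i ≤ 2*k) :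
    Even (cnt n e i (4*n+2)) := by
  have h := he.even_big i hi hi'
  have h2 := Finset.card_filter_add_card_filter_not (s := Finset.Icc 1 (4*n+2))
    (fun j => e i j ≤ 4*n+2)
  simp only [not_le, Nat.card_Icc] at h2
  unfold cnt
  rw [Nat.even_iff] at h ⊢
  omega

lemma cnt_eq_sum (he : IsAdmissible n k e) {i : ℕ} (hi : 1 ≤ i) (hi' : i ≤ 2*k) (m : ℕ) :
    cnt n e i m = ∑ t ∈ Finset.Icc 1 m, mult n e i t := by
  induction m with
  | zero => simpa using cnt_zero he hi hi'
  | succ m ih => rw [cnt_succ, ih, Finset.sum_Icc_succ_top (by omega)]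

lemma occ_card (n k : ℕ) (e : ℕ → ℕ → ℕ) (t : ℕ) :
    (((Finset.Icc 1 (2*k)) ×ˢ (Finset.Icc 1 (4*n+2))).filter
      (fun p => e p.1 p.2 = t)).card = ∑ i ∈ Finset.Icc 1 (2*k), mult n e i t := by
  unfold mult
  simp only [Finset.card_filter]
  rw [Finset.sum_product]

/-- Each value occurs exactly `k` times: at most `k` times by (R3) and (R5), and the numbers of
occurrences add up to the number of cells. -/
lemma occ_eq (he : IsAdmissible n k e) {t : ℕ} (h1 : 1 ≤ t) (h2 : t ≤ 8*n+4) :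
    ∑ i ∈ Finset.Icc 1 (2*k), mult n e i t = k := by
  have hle : ∀ t ∈ Finset.Icc 1 (8*n+4), ∑ i ∈ Finset.Icc 1 (2*k), mult n e i t ≤ k := by
    intro t ht
    rw [Finset.mem_Icc] at ht
    have hb := he.balanced t ht.1 ht.2
    rw [occ_card, occ_card] at hb
    have hs : ∑ i ∈ Finset.Icc 1 (2*k), (mult n e i t + mult n e i (8*n+5-t))
        ≤ ∑ i ∈ Finset.Icc 1 (2*k), 1 := by
      apply Finset.sum_le_sum
      intro i hi
      rw [Finset.mem_Icc] at hi
      exact mult_pair he hi.1 hi.2 ht.2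
    rw [Finset.sum_add_distrib] at hs
    simp only [Finset.sum_const, Nat.card_Icc, smul_eq_mul] at hs
    omega
  have htot : ∑ t ∈ Finset.Icc 1 (8*n+4), ∑ i ∈ Finset.Icc 1 (2*k), mult n e i t
      = ∑ t ∈ Finset.Icc 1 (8*n+4), k := by
    rw [Finset.sum_comm]
    have : ∀ i ∈ Finset.Icc 1 (2*k), ∑ t ∈ Finset.Icc 1 (8*n+4), mult n e i t = 4*n+2 := by
      intro i hi
      rw [Finset.mem_Icc] at hi
      rw [← cnt_eq_sum he hi.1 hi.2, cnt_top he hi.1 hi.2]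
    rw [Finset.sum_congr rfl this]
    simp only [Finset.sum_const, Nat.card_Icc, smul_eq_mul, Nat.add_sub_cancel]
    ring
  exact (Finset.sum_eq_sum_iff_of_le hle).mp htot t (Finset.mem_Icc.mpr ⟨h1, h2⟩)

lemma sum_cnt (he : IsAdmissible n k e) {m : ℕ} (hm : m ≤ 8*n+4) :
    ∑ i ∈ Finset.Icc 1 (2*k), cnt n e i m = m * k := by
  have h : ∀ i ∈ Finset.Icc 1 (2*k), cnt n e i m = ∑ t ∈ Finset.Icc 1 m, mult n e i t := by
    intro i hi
    rw [Finset.mem_Icc] at hi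
    exact cnt_eq_sum he hi.1 hi.2 m
  rw [Finset.sum_congr rfl h, Finset.sum_comm]
  have h2 : ∀ t ∈ Finset.Icc 1 m, ∑ i ∈ Finset.Icc 1 (2*k), mult n e i t = k := by
    intro t ht
    rw [Finset.mem_Icc] at ht
    exact occ_eq he ht.1 (by omega)
  rw [Finset.sum_congr rfl h2]
  simp

/-- The first row has at least the average number `m/2` of entries `≤ m`. -/
lemma le_two_cnt_first (he : IsAdmissible n k e) (hk : 1 ≤ k) {m : ℕ} (hm : m ≤ 8*n+4) :
    m ≤ 2 * cnt n e 1 m := by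
  have h := sum_cnt he hm
  have h2 : ∑ i ∈ Finset.Icc 1 (2*k), cnt n e i m
      ≤ ∑ i ∈ Finset.Icc 1 (2*k), cnt n e 1 m := by
    apply Finset.sum_le_sum
    intro i hi
    rw [Finset.mem_Icc] at hi
    exact cnt_anti he m le_rfl hi.1 hi.2
  rw [h] at h2
  simp only [Finset.sum_const, Nat.card_Icc, smul_eq_mul, Nat.add_sub_cancel] at h2
  refine Nat.le_of_mul_le_mul_right (c := k) ?_ hk
  linarith

/-- If the last row attains the average number `p` of entries `≤ 2p`, then so does every row. -/
lemma cnt_eq_of_last (he : IsAdmissible n k e) {p : ℕ} (hp : 2*p ≤ 8*n+4)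
    (hlast : cnt n e (2*k) (2*p) = p) {i : ℕ} (hi : 1 ≤ i) (hi' : i ≤ 2*k) :
    cnt n e i (2*p) = p := by
  have h := sum_cnt he hp
  have hle : ∀ i ∈ Finset.Icc 1 (2*k), p ≤ cnt n e i (2*p) := by
    intro i hi
    rw [Finset.mem_Icc] at hi
    have := cnt_anti he (2*p) hi.1 hi.2 le_rfl
    omega
  have htot : ∑ i ∈ Finset.Icc 1 (2*k), p = ∑ i ∈ Finset.Icc 1 (2*k), cnt n e i (2*p) := by
    rw [h]
    simp only [Finset.sum_const, Nat.card_Icc, smul_eq_mul, Nat.add_sub_cancel]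
    ring
  exact ((Finset.sum_eq_sum_iff_of_le hle).mp htot i (Finset.mem_Icc.mpr ⟨hi, hi'⟩)).symm

end

/-- case (v), `S(2k) = B ∪ {4n-2, 4n+2}` forces
`S(1) = A ∪ {4n-1, 4n, 4n+1}` (pattern `X₅`); in particular
`e(1, 2n+2) ≠ 4n+2`. -/
theorem stmt_9 (n k : ℕ) (hn : 1 ≤ n) (hk : 1 ≤ k) (e : ℕ → ℕ → ℕ)
    (he : IsAdmissible n k e) (hsupp : SupportedOnXv6 n k e)
    (hlast : smallSet n e (2*k) = setB n ∪ {4*n-2, 4*n+2}) :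
    smallSet n e 1 = setA n ∪ {4*n-1, 4*n, 4*n+1} ∧
    e 1 (2*n+2) ≠ 4*n+2 := by
  have hl : ∀ t, 1 ≤ t → t ≤ 4*n+2 →
      (1 ≤ mult n e (2*k) t ↔ (t ≤ 4*n-2 ∧ t % 2 = 0) ∨ t = 4*n+2) := by
    intro t h1 h2
    have h3 := mem_smallSet_iff n e (2*k) t
    rw [hlast] at h3
    simp only [setB, Finset.mem_union, Finset.mem_filter, Finset.mem_Icc, Finset.mem_insert,
      Finset.mem_singleton] at h3
    constructor
    · intro h
      have := h3.mpr ⟨h2, h⟩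
      omega
    · intro h
      exact (h3.mp (by omega)).2
  have hm1 := fun t => mult_le_one he (i := 2*k) (by omega) le_rfl t
  have hlc : ∀ p, p ≤ 2*n-1 → cnt n e (2*k) (2*p) = p := by
    intro p
    induction p with
    | zero => intro _; exact cnt_zero he (by omega) le_rfl
    | succ p ih =>
      intro hp
      have h0 := ih (by omega)
      have h1 := cnt_succ n e (2*k) (2*p)
      have h2 := cnt_succ n e (2*k) (2*p+1)
      have h3 := hl (2*p+1) (by omega) (by omega)
      have h4 := hl (2*p+1+1) (by omega) (by omega)
      have h5 := hm1 (2*p+1+1)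
      rw [show 2*(p+1) = 2*p+1+1 by ring]
      omega
  have hall : ∀ p, p ≤ 2*n-1 → ∀ i, 1 ≤ i → i ≤ 2*k → cnt n e i (2*p) = p :=
    fun p hp i hi hi' => cnt_eq_of_last he (by omega) (hlc p hp) hi hi'
  have hodd : ∀ p, p ≤ 2*n-2 → mult n e 1 (2*p+1) = 1 ∧ mult n e 1 (2*p+2) = 0 := by
    intro p hp
    have h1 := hall p (by omega) 1 le_rfl (by omega)
    have h2 := hall (p+1) (by omega) 1 le_rfl (by omega)
    have h3 := cnt_succ n e 1 (2*p)
    have h4 := cnt_succ n e 1 (2*p+1)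
    have h5 := le_two_cnt_first he hk (m := 2*p+1) (by omega)
    rw [show 2*(p+1) = 2*p+1+1 by ring] at h2
    have h6 : mult n e 1 (2*p+1+1) = mult n e 1 (2*p+2) := rfl
    omega
  obtain ⟨q, hq⟩ : ∃ q, 4*n = q+2 := ⟨4*n-2, by omega⟩
  have hbase : ∀ i, 1 ≤ i → i ≤ 2*k → cnt n e i q = 2*n-1 := by
    intro i hi hi'
    have := hall (2*n-1) le_rfl i hi hi'
    rwa [show 2*(2*n-1) = q by omega] at this
  have hexp : ∀ i, cnt n e i (4*n+1) =
        cnt n e i q + mult n e i (4*n-1) + mult n e i (4*n) + mult n e i (4*n+1) ∧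
      cnt n e i (4*n+2) = cnt n e i (4*n+1) + mult n e i (4*n+2) := by
    intro i
    refine ⟨?_, cnt_succ n e i (4*n+1)⟩
    rw [cnt_succ n e i (4*n), hq, cnt_succ n e i (q+1), cnt_succ n e i q]
    rfl
  have hlastN1 : cnt n e (2*k) (4*n+1) = 2*n-1 := by
    have h1 := (hexp (2*k)).1
    have h2 := hbase (2*k) (by omega) le_rfl
    have h3 := hl (4*n-1) (by omega) (by omega)
    have h4 := hl (4*n) (by omega) (by omega)
    have h5 := hl (4*n+1) (by omega) (by omega)
    omega
  have hlastN : cnt n e (2*k) (4*n+2) = 2*n := by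
    have h1 := (hexp (2*k)).2
    have h2 := hl (4*n+2) (by omega) (by omega)
    have h3 := hm1 (4*n+2)
    omega
  -- A row omits at least one of the last four values, since its count up to `4n+2` is even.
  have hsize : ∀ i, 1 ≤ i → i ≤ 2*k →
      cnt n e i (4*n+2) = 2*n ∨ cnt n e i (4*n+2) = 2*n+2 := by
    intro i hi hi'
    have h1 := hexp i
    have h2 := hbase i hi hi'
    have h3 := mult_le_one he hi hi' (4*n-1)
    have h4 := mult_le_one he hi hi' (4*n)
    have h5 := mult_le_one he hi hi' (4*n+1)
    have h6 := mult_le_one he hi hi' (4*n+2)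
    have h7 := Nat.even_iff.mp (cnt_even he hi hi')
    have h8 := cnt_anti he (4*n+2) hi hi' le_rfl
    omega
  have hfirst : 2*n+2 ≤ cnt n e 1 (4*n+1) := by
    by_contra hcon
    have hlt : ∑ i ∈ Finset.Icc 1 (2*k), 2 * cnt n e i (4*n+1)
        < ∑ i ∈ Finset.Icc 1 (2*k), (cnt n e i (4*n+2) + 2*n) := by
      apply Finset.sum_lt_sum
      · intro i hi
        rw [Finset.mem_Icc] at hi
        have h1 := hsize i hi.1 hi.2
        have h2 := cnt_anti he (4*n+1) le_rfl hi.1 hi.2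
        have h3 := (hexp i).2
        omega
      · exact ⟨2*k, Finset.mem_Icc.mpr ⟨by omega, le_rfl⟩, by omega⟩
    rw [← Finset.mul_sum, Finset.sum_add_distrib, sum_cnt he (by omega),
      sum_cnt he (by omega)] at hlt
    simp only [Finset.sum_const, Nat.card_Icc, smul_eq_mul, Nat.add_sub_cancel] at hlt
    nlinarith
  have hrow : ∀ t, t ≤ 4*n+2 → (1 ≤ mult n e 1 t ↔
      (1 ≤ t ∧ t ≤ 4*n-3 ∧ t % 2 = 1) ∨ t = 4*n-1 ∨ t = 4*n ∨ t = 4*n+1) := by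
    intro t ht
    have h1 := hexp 1
    have h2 := hbase 1 le_rfl (by omega)
    have h3 := mult_le_one he (i := 1) le_rfl (by omega) (4*n-1)
    have h4 := mult_le_one he (i := 1) le_rfl (by omega) (4*n)
    have h5 := mult_le_one he (i := 1) le_rfl (by omega) (4*n+1)
    have h6 := hsize 1 le_rfl (by omega)
    rcases Nat.eq_zero_or_pos t with h0 | h0
    · subst h0
      have h7 : mult n e 1 0 = 0 := by
        have := cnt_zero he (i := 1) le_rfl (by omega)
        simpa [cnt, mult] using this
      omega
    by_cases hs : t ≤ 4*n-2
    · obtain ⟨p, hp⟩ : ∃ p, t = 2*p+1 ∨ t = 2*p+2 := ⟨(t-1)/2, by omega⟩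
      have h7 := hodd p (by omega)
      rcases hp with rfl | rfl <;> omega
    · have : t = 4*n-1 ∨ t = 4*n ∨ t = 4*n+1 ∨ t = 4*n+2 := by omega
      rcases this with rfl | rfl | rfl | rfl <;> omega
  have hS : smallSet n e 1 = setA n ∪ {4*n-1, 4*n, 4*n+1} := by
    ext t
    rw [mem_smallSet_iff]
    simp only [setA, Finset.mem_union, Finset.mem_filter, Finset.mem_Icc, Finset.mem_insert,
      Finset.mem_singleton]
    constructor
    · rintro ⟨h1, h2⟩
      have := (hrow t h1).mp h2
      omega
    · intro h
      exact ⟨by omega, (hrow t (by omega)).mpr (by omega)⟩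
  refine ⟨hS, fun h => ?_⟩
  have h1 : 4*n+2 ∈ smallSet n e 1 := by
    unfold smallSet
    rw [Finset.mem_image]
    exact ⟨2*n+2, Finset.mem_filter.mpr ⟨Finset.mem_Icc.mpr ⟨by omega, by omega⟩, h.le⟩, h⟩
  have h2 := (hrow (4*n+2) le_rfl).mp ((mem_smallSet_iff n e 1 _).mp h1).2
  omega
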